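/- Let (λ_k)_{k≥1} and (μ_k)_{k≥1} be strictly increasing sequences of positive real numbers tending to infinity, and let (a_k), (b_k) be complex sequences such that the series Σ a_k and Σ b_k converge (i.e., their partial sums converge). Let (ν_k)_{k≥1} be a strictly increasing sequence of real numbers tending to infinity whose range is exactly the set {λ_i + μ_j : i, j ≥ 1}, and for each k define c_k = Σ_{(i,j) : λ_i + μ_j = ν_k} a_i·b_j (a finite sum, since each ν_k has only finitely many such representations). If the series Σ c_k converges, then Σ_{k} c_k = (Σ_{k} a_k)·(Σ_{k} b_k). -/

import Mathlib

open Filter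

/-- The number of terms of a strictly increasing unbounded sequence that are at most `x`. -/
noncomputable def dirichletCount (lam : ℕ → ℝ) (x : ℝ) : ℕ := sInf {n | x < lam n}

section Counting

variable {lam : ℕ → ℝ}

theorem lt_dirichletCount_iff (hlam : StrictMono lam) (htop : Tendsto lam atTop atTop)
    (i : ℕ) (x : ℝ) : i < dirichletCount lam x ↔ lam i ≤ x := by
  constructor
  · intro h
    exact not_lt.1 (Nat.notMem_of_lt_sInf h)
  · intro h
    have hne : {n | x < lam n}.Nonempty := (htop.eventually_gt_atTop x).exists
    have hmem : x < lam (dirichletCount lam x) := Nat.sInf_mem hne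
    exact hlam.lt_iff_lt.1 (h.trans_lt hmem)

theorem monotone_dirichletCount (hlam : StrictMono lam) (htop : Tendsto lam atTop atTop) :
    Monotone (dirichletCount lam) := fun x y hxy =>
  le_of_forall_lt fun i hi => (lt_dirichletCount_iff hlam htop i y).2
    (((lt_dirichletCount_iff hlam htop i x).1 hi).trans hxy)

theorem tendsto_dirichletCount (hlam : StrictMono lam) (htop : Tendsto lam atTop atTop) :
    Tendsto (dirichletCount lam) atTop atTop :=
  tendsto_atTop_atTop.2 fun i => ⟨lam i, fun x hx =>
    ((lt_dirichletCount_iff hlam htop i x).2 hx).le⟩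

/-- The summatory function `x ↦ ∑_{lam i ≤ x} a i`. -/
noncomputable def dirichletSum (lam : ℕ → ℝ) (a : ℕ → ℂ) (x : ℝ) : ℂ :=
  ∑ i ∈ Finset.range (dirichletCount lam x), a i

variable {a : ℕ → ℂ}

theorem measurable_dirichletSum (hlam : StrictMono lam) (htop : Tendsto lam atTop atTop) :
    Measurable (dirichletSum lam a) :=
  (measurable_from_nat (f := fun n => ∑ i ∈ Finset.range n, a i)).comp
    (monotone_dirichletCount hlam htop).measurable

theorem tendsto_dirichletSum (hlam : StrictMono lam) (htop : Tendsto lam atTop atTop) {A : ℂ}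
    (hA : Tendsto (fun n => ∑ k ∈ Finset.range n, a k) atTop (nhds A)) :
    Tendsto (dirichletSum lam a) atTop (nhds A) :=
  hA.comp (tendsto_dirichletCount hlam htop)

theorem exists_norm_dirichletSum_le (lam : ℕ → ℝ) {A : ℂ}
    (hA : Tendsto (fun n => ∑ k ∈ Finset.range n, a k) atTop (nhds A)) :
    ∃ K, ∀ x, ‖dirichletSum lam a x‖ ≤ K := by
  obtain ⟨K, hK⟩ := (Metric.isBounded_range_of_tendsto _ hA).exists_norm_le
  exact ⟨K, fun x => hK _ ⟨_, rfl⟩⟩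

theorem dirichletSum_eq_sum_ite (hlam : StrictMono lam) (htop : Tendsto lam atTop atTop)
    {x : ℝ} {M : ℕ} (hM : x < lam M) :
    dirichletSum lam a x = ∑ i ∈ Finset.range M, if lam i ≤ x then a i else 0 := by
  rw [← Finset.sum_filter, dirichletSum]
  congr 1
  ext i
  simp only [Finset.mem_range, Finset.mem_filter, lt_dirichletCount_iff hlam htop]
  exact ⟨fun h => ⟨hlam.lt_iff_lt.1 (h.trans_lt hM), h⟩, And.right⟩

end Counting

/-- The summatory function of the formal product, as a sum over pairs of indices. -/
theorem dirichletSum_formal_product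
    {lam mu : ℕ → ℝ} (hlam : StrictMono lam) (hmu : StrictMono mu)
    (hlampos : ∀ k, 0 < lam k) (hmupos : ∀ k, 0 < mu k) {a b : ℕ → ℂ}
    {nu : ℕ → ℝ} (hnu : StrictMono nu) (hnutop : Tendsto nu atTop atTop)
    (hnurange : Set.range nu = {x : ℝ | ∃ i j, lam i + mu j = x}) {c : ℕ → ℂ}
    (hc : ∀ k, c k = ∑ᶠ p ∈ {p : ℕ × ℕ | lam p.1 + mu p.2 = nu k}, a p.1 * b p.2)
    {x : ℝ} {M M' : ℕ} (hM : x < lam M) (hM' : x < mu M') :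
    dirichletSum nu c x = ∑ i ∈ Finset.range M, ∑ j ∈ Finset.range M',
      if lam i + mu j ≤ x then a i * b j else 0 := by
  have hcoeff : ∀ k ∈ Finset.range (dirichletCount nu x), c k =
      ∑ p ∈ Finset.range M ×ˢ Finset.range M',
        if lam p.1 + mu p.2 = nu k then a p.1 * b p.2 else 0 := by
    intro k hk
    have hk' : nu k ≤ x := (lt_dirichletCount_iff hnu hnutop k x).1 (Finset.mem_range.1 hk)
    rw [hc, ← Finset.sum_filter, ← finsum_mem_coe_finset]
    refine finsum_mem_congr (Set.ext fun p => ?_) fun _ _ => rfl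
    simp only [Set.mem_ofPred_eq, Finset.coe_filter, Finset.mem_product, Finset.mem_range]
    refine ⟨fun h => ⟨⟨hlam.lt_iff_lt.1 ?_, hmu.lt_iff_lt.1 ?_⟩, h⟩, And.right⟩
    · linarith [hmupos p.2]
    · linarith [hlampos p.1]
  rw [dirichletSum, Finset.sum_congr rfl hcoeff, Finset.sum_comm, Finset.sum_product]
  refine Finset.sum_congr rfl fun i _ => Finset.sum_congr rfl fun j _ => ?_
  obtain ⟨l, hl⟩ : lam i + mu j ∈ Set.range nu := hnurange ▸ ⟨i, j, rfl⟩
  simp only [← hl, hnu.injective.eq_iff, Finset.sum_ite_eq, Finset.mem_range,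
    lt_dirichletCount_iff hnu hnutop]

theorem integral_ite_add_le_eq {l m T : ℝ} (hl : 0 < l) (hm : 0 < m) (hT : 0 < T) (z : ℂ) :
    ∫ s in Set.Ioo (0 : ℝ) 1, (if l + m ≤ T * s then z else 0) =
      ∫ s in Set.Ioo (0 : ℝ) 1, (if l ≤ T * s ∧ m ≤ T * (1 - s) then z else 0) := by
  have h₁ : ∀ s, l + m ≤ T * s ↔ (l + m) / T ≤ s := fun s => (div_le_iff₀' hT).symm
  have h₂ : ∀ s, (l ≤ T * s ∧ m ≤ T * (1 - s)) ↔ s ∈ Set.Icc (l / T) (1 - m / T) := by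
    intro s
    rw [Set.mem_Icc, div_le_iff₀' hT, le_sub_comm, div_le_iff₀' hT]
  have e₁ : Set.Ioo (0 : ℝ) 1 ∩ Set.Ici ((l + m) / T) = Set.Ico ((l + m) / T) 1 := by
    ext s
    have : 0 < (l + m) / T := by positivity
    simp only [Set.mem_inter_iff, Set.mem_Ioo, Set.mem_Ici, Set.mem_Ico]
    exact ⟨fun h => ⟨h.2, h.1.2⟩, fun h => ⟨⟨this.trans_le h.1, h.2⟩, h.1⟩⟩
  have e₂ : Set.Ioo (0 : ℝ) 1 ∩ Set.Icc (l / T) (1 - m / T) = Set.Icc (l / T) (1 - m / T) := by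
    refine Set.inter_eq_right.2 fun s hs => ⟨?_, ?_⟩
    · exact (div_pos hl hT).trans_le hs.1
    · linarith [hs.2, div_pos hm hT]
  calc
    _ = ∫ s in Set.Ioo (0 : ℝ) 1, (Set.Ici ((l + m) / T)).indicator (fun _ => z) s := by
      simp only [h₁, Set.indicator_apply, Set.mem_Ici]
    _ = ∫ s in Set.Ioo (0 : ℝ) 1, (Set.Icc (l / T) (1 - m / T)).indicator (fun _ => z) s := by
      rw [MeasureTheory.setIntegral_indicator measurableSet_Ici,
        MeasureTheory.setIntegral_indicator measurableSet_Icc, e₁, e₂,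
        MeasureTheory.setIntegral_const, MeasureTheory.setIntegral_const,
        Real.volume_real_Ico, Real.volume_real_Icc]
      congr 2
      ring
    _ = _ := by
      simp only [h₂, Set.indicator_apply]

theorem integrable_ite_const {p : ℝ → Prop} [DecidablePred p] (hp : MeasurableSet {s | p s})
    (z : ℂ) : MeasureTheory.IntegrableOn (fun s => if p s then z else 0) (Set.Ioo (0 : ℝ) 1) :=
  (MeasureTheory.integrable_const z).indicator hp |>.congr
    (Eventually.of_forall fun s => by simp [Set.indicator_apply])

/-- The mean of the summatory function of the formal product is the normalized convolution of
the summatory functions of the factors. -/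
theorem integral_dirichletSum_formal_product
    {lam mu : ℕ → ℝ} (hlam : StrictMono lam) (hmu : StrictMono mu)
    (hlampos : ∀ k, 0 < lam k) (hmupos : ∀ k, 0 < mu k)
    (hlamtop : Tendsto lam atTop atTop) (hmutop : Tendsto mu atTop atTop) {a b : ℕ → ℂ}
    {nu : ℕ → ℝ} (hnu : StrictMono nu) (hnutop : Tendsto nu atTop atTop)
    (hnurange : Set.range nu = {x : ℝ | ∃ i j, lam i + mu j = x}) {c : ℕ → ℂ}
    (hc : ∀ k, c k = ∑ᶠ p ∈ {p : ℕ × ℕ | lam p.1 + mu p.2 = nu k}, a p.1 * b p.2)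
    {T : ℝ} (hT : 0 < T) :
    ∫ s in Set.Ioo (0 : ℝ) 1, dirichletSum nu c (T * s) =
      ∫ s in Set.Ioo (0 : ℝ) 1, dirichletSum lam a (T * s) * dirichletSum mu b (T * (1 - s)) := by
  obtain ⟨M, hM⟩ := (hlamtop.eventually_gt_atTop T).exists
  obtain ⟨M', hM'⟩ := (hmutop.eventually_gt_atTop T).exists
  have hle : ∀ s ∈ Set.Ioo (0 : ℝ) 1, T * s < T ∧ T * (1 - s) < T := fun s hs =>
    ⟨by nlinarith [hs.2], by nlinarith [hs.1]⟩
  have hleft : ∀ s ∈ Set.Ioo (0 : ℝ) 1, dirichletSum nu c (T * s) =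
      ∑ i ∈ Finset.range M, ∑ j ∈ Finset.range M',
        if lam i + mu j ≤ T * s then a i * b j else 0 := fun s hs =>
    dirichletSum_formal_product hlam hmu hlampos hmupos hnu hnutop hnurange hc
      ((hle s hs).1.trans hM) ((hle s hs).1.trans hM')
  have hright : ∀ s ∈ Set.Ioo (0 : ℝ) 1,
      dirichletSum lam a (T * s) * dirichletSum mu b (T * (1 - s)) =
      ∑ i ∈ Finset.range M, ∑ j ∈ Finset.range M',
        if lam i ≤ T * s ∧ mu j ≤ T * (1 - s) then a i * b j else 0 := by
    intro s hs
    rw [dirichletSum_eq_sum_ite hlam hlamtop ((hle s hs).1.trans hM),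
      dirichletSum_eq_sum_ite hmu hmutop ((hle s hs).2.trans hM'), Finset.sum_mul_sum]
    simp only [ite_and, ite_mul, mul_ite, zero_mul, mul_zero]
    refine Finset.sum_congr rfl fun i _ => Finset.sum_congr rfl fun j _ => ?_
    split_ifs <;> rfl
  have hint₁ : ∀ i j, MeasureTheory.IntegrableOn
      (fun s => if lam i + mu j ≤ T * s then a i * b j else 0) (Set.Ioo (0 : ℝ) 1) :=
    fun i j => integrable_ite_const (measurableSet_le (by fun_prop) (by fun_prop)) _
  have hint₂ : ∀ i j, MeasureTheory.IntegrableOn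
      (fun s => if lam i ≤ T * s ∧ mu j ≤ T * (1 - s) then a i * b j else 0)
      (Set.Ioo (0 : ℝ) 1) :=
    fun i j => integrable_ite_const (by measurability) _
  rw [MeasureTheory.setIntegral_congr_fun measurableSet_Ioo hleft,
    MeasureTheory.setIntegral_congr_fun measurableSet_Ioo hright,
    MeasureTheory.integral_finsetSum _ fun i _ =>
      MeasureTheory.integrable_finsetSum _ fun j _ => hint₁ i j,
    MeasureTheory.integral_finsetSum _ fun i _ =>
      MeasureTheory.integrable_finsetSum _ fun j _ => hint₂ i j]
  refine Finset.sum_congr rfl fun i _ => ?_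
  rw [MeasureTheory.integral_finsetSum _ fun j _ => hint₁ i j,
    MeasureTheory.integral_finsetSum _ fun j _ => hint₂ i j]
  exact Finset.sum_congr rfl fun j _ => integral_ite_add_le_eq (hlampos i) (hmupos j) hT _

/-- Bounded convergence for families of functions on the unit interval. -/
theorem tendsto_integral_Ioo_of_bounded {F : ℕ → ℝ → ℂ} {L : ℂ} {K : ℝ}
    (hmeas : ∀ n, Measurable (F n)) (hbound : ∀ n s, ‖F n s‖ ≤ K)
    (hlim : ∀ s ∈ Set.Ioo (0 : ℝ) 1, Tendsto (fun n => F n s) atTop (nhds L)) :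
    Tendsto (fun n => ∫ s in Set.Ioo (0 : ℝ) 1, F n s) atTop (nhds L) := by
  have h := MeasureTheory.tendsto_integral_of_dominated_convergence
    (μ := MeasureTheory.volume.restrict (Set.Ioo (0 : ℝ) 1)) (F := F) (f := fun _ => L)
    (fun _ => K) (fun n => (hmeas n).aestronglyMeasurable) (MeasureTheory.integrable_const K)
    (fun n => Eventually.of_forall (hbound n))
    ((MeasureTheory.ae_restrict_iff' measurableSet_Ioo).2 (Eventually.of_forall hlim))
  simpa using h

/-- Hardy–Riesz multiplication theorem for (generalized) Dirichlet series at `z = 0`: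
if `Σ a_k` and `Σ b_k` converge and the coefficient series `Σ c_k` of the formal
product of the Dirichlet series `Σ a_k e^{-λ_k z}` and `Σ b_k e^{-μ_k z}` converges,
then `Σ c_k = (Σ a_k)·(Σ b_k)`. -/
theorem dirichlet_formal_product_at_zero
    (lam mu : ℕ → ℝ) (hlam : StrictMono lam) (hmu : StrictMono mu)
    (hlampos : ∀ k, 0 < lam k) (hmupos : ∀ k, 0 < mu k)
    (hlamtop : Tendsto lam atTop atTop) (hmutop : Tendsto mu atTop atTop)
    (a b : ℕ → ℂ) (A B : ℂ)
    (hA : Tendsto (fun n => ∑ k ∈ Finset.range n, a k) atTop (nhds A))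
    (hB : Tendsto (fun n => ∑ k ∈ Finset.range n, b k) atTop (nhds B))
    (nu : ℕ → ℝ) (hnu : StrictMono nu) (hnutop : Tendsto nu atTop atTop)
    (hnurange : Set.range nu = {x : ℝ | ∃ i j, lam i + mu j = x})
    (c : ℕ → ℂ)
    (hc : ∀ k, c k = ∑ᶠ p ∈ {p : ℕ × ℕ | lam p.1 + mu p.2 = nu k}, a p.1 * b p.2)
    (C : ℂ)
    (hC : Tendsto (fun n => ∑ k ∈ Finset.range n, c k) atTop (nhds C)) :
    C = A * B := by
  have hscale : ∀ s : ℝ, 0 < s → Tendsto (fun n : ℕ => ((n : ℝ) + 1) * s) atTop atTop :=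
    fun s hs => (tendsto_atTop_add_const_right _ 1 tendsto_natCast_atTop_atTop).atTop_mul_const hs
  obtain ⟨KA, hKA⟩ := exists_norm_dirichletSum_le lam hA
  obtain ⟨KB, hKB⟩ := exists_norm_dirichletSum_le mu hB
  obtain ⟨KC, hKC⟩ := exists_norm_dirichletSum_le nu hC
  have hmeasA := measurable_dirichletSum (a := a) hlam hlamtop
  have hmeasB := measurable_dirichletSum (a := b) hmu hmutop
  have hmeasC := measurable_dirichletSum (a := c) hnu hnutop
  have hlimC : Tendsto (fun n : ℕ => ∫ s in Set.Ioo (0 : ℝ) 1,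
      dirichletSum nu c (((n : ℝ) + 1) * s)) atTop (nhds C) :=
    tendsto_integral_Ioo_of_bounded (fun n => by fun_prop) (fun n s => hKC _)
      fun s hs => (tendsto_dirichletSum hnu hnutop hC).comp (hscale s hs.1)
  have hlimAB : Tendsto (fun n : ℕ => ∫ s in Set.Ioo (0 : ℝ) 1,
      dirichletSum lam a (((n : ℝ) + 1) * s) * dirichletSum mu b (((n : ℝ) + 1) * (1 - s)))
      atTop (nhds (A * B)) := by
    refine tendsto_integral_Ioo_of_bounded (K := KA * KB) (fun n => by fun_prop) (fun n s => ?_)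
      fun s hs => ?_
    · exact norm_mul_le_of_le (hKA _) (hKB _)
    · exact ((tendsto_dirichletSum hlam hlamtop hA).comp (hscale s hs.1)).mul
        ((tendsto_dirichletSum hmu hmutop hB).comp (hscale (1 - s) (sub_pos.2 hs.2)))
  refine tendsto_nhds_unique hlimC (hlimAB.congr fun n => ?_)
  exact (integral_dirichletSum_formal_product hlam hmu hlampos hmupos hlamtop hmutop hnu hnutop
    hnurange hc n.cast_add_one_pos).symm
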